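/- Let n ≥ 5, p ∈ (0,1), and m = ⌊np⌋ with 1 ≤ m ≤ n−2. Define ψ(m,p) = (m+1)·C(n,m+1)·p^{m+1}·(1−p)^{n−m}. Then there exist universal constants c > 0.29 and c' < 0.44 such that c·√n·√(p(1−p)) ≤ ψ(m,p) ≤ c'·√n·√(p(1−p)). -/

import Mathlib

namespace S7

/-- log of `k! e^k / k^(k+1/2)` -/
noncomputable def H (k : ℕ) : ℝ := Real.log (k.factorial : ℝ) + k - (k + 1/2) * Real.log k

/-- log of `(k+1/2)^(k+1/2) e^(-k-1/2) / k!` -/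
noncomputable def G (k : ℕ) : ℝ :=
  (k + 1/2) * Real.log (k + 1/2) - (k + 1/2) - Real.log (k.factorial : ℝ)

lemma H_eq (k : ℕ) (hk : 1 ≤ k) : H k = Real.log (Stirling.stirlingSeq k) + 1/2 * Real.log 2 := by
  have hk0 : (k : ℝ) ≠ 0 := by positivity
  rw [Stirling.log_stirlingSeq_formula, H, Real.log_mul (by norm_num) hk0,
    Real.log_div hk0 (Real.exp_pos 1).ne', Real.log_exp]
  ring

lemma H_anti {j k : ℕ} (hj : 1 ≤ j) (hjk : j ≤ k) : H k ≤ H j := by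
  rw [H_eq k (hj.trans hjk), H_eq j hj]
  obtain ⟨j, rfl⟩ := Nat.exists_eq_add_of_le' hj
  obtain ⟨k, rfl⟩ := Nat.exists_eq_add_of_le' (hj.trans hjk)
  have := Stirling.log_stirlingSeq'_antitone (show j ≤ k by omega)
  simp only [Function.comp, Nat.succ_eq_add_one] at this
  linarith

lemma H_lower (k : ℕ) (hk : 1 ≤ k) : 1/2 * Real.log (2 * Real.pi) ≤ H k := by
  rw [H_eq k hk, Real.log_mul (by norm_num) Real.pi_pos.ne']
  have h := Stirling.sqrt_pi_le_stirlingSeq (n := k) (by omega)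
  have := Real.log_le_log (Real.sqrt_pos.2 Real.pi_pos) h
  rw [Real.log_sqrt Real.pi_pos.le] at this
  linarith

lemma aux (t : ℝ) (h0 : 0 ≤ t) (h1 : t < 1) :
    (1 + t) * Real.log (1 + t) - (1 - t) * Real.log (1 - t) ≤ 2 * t := by
  let f : ℝ → ℝ := fun t => (1 + t) * Real.log (1 + t) - (1 - t) * Real.log (1 - t) - 2 * t
  have hd : ∀ x ∈ Set.Ico (0:ℝ) 1, HasDerivAt f (Real.log (1 + x) + Real.log (1 - x)) x := by
    intro x hx
    have e1 : (1 + x) ≠ 0 := by linarith [hx.1]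
    have e2 : (1 - x) ≠ 0 := by linarith [hx.2]
    have a1 : HasDerivAt (fun t : ℝ => 1 + t) 1 x := (hasDerivAt_id x).const_add 1
    have a2 : HasDerivAt (fun t : ℝ => 1 - t) (-1) x := (hasDerivAt_id x).const_sub 1
    have := ((a1.mul (a1.log e1)).sub (a2.mul (a2.log e2))).sub ((hasDerivAt_id x).const_mul 2)
    refine this.congr_deriv ?_
    field_simp
    ring
  have hanti : AntitoneOn f (Set.Ico 0 1) := by
    apply antitoneOn_of_deriv_nonpos (convex_Ico 0 1)
    · exact fun x hx => (hd x hx).continuousAt.continuousWithinAt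
    · intro x hx
      rw [interior_Ico] at hx
      exact (hd x ⟨hx.1.le, hx.2⟩).differentiableAt.differentiableWithinAt
    · intro x hx
      rw [interior_Ico] at hx
      rw [(hd x ⟨hx.1.le, hx.2⟩).deriv]
      have h1 := Real.log_le_sub_one_of_pos (show 0 < 1 + x by linarith [hx.1])
      have h2 := Real.log_le_sub_one_of_pos (show 0 < 1 - x by linarith [hx.2])
      linarith
  have := hanti (show (0:ℝ) ∈ Set.Ico 0 1 by simp) ⟨h0, h1⟩ h0
  simp only [f] at this
  norm_num at this
  linarith

lemma G_step (k : ℕ) : G (k + 1) ≤ G k := by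
  have hk : (0:ℝ) ≤ k := by positivity
  set y : ℝ := k + 1 with hy
  have hy0 : 0 < y := by positivity
  have ht : 1 / (2 * y) < 1 := by rw [div_lt_one (by positivity)]; linarith
  have h := aux (1 / (2 * y)) (by positivity) ht
  have e1 : y + 1/2 = y * (1 + 1 / (2*y)) := by field_simp
  have e2 : y - 1/2 = y * (1 - 1 / (2*y)) := by field_simp
  have l1 : Real.log (y + 1/2) = Real.log y + Real.log (1 + 1 / (2*y)) := by
    rw [e1, Real.log_mul hy0.ne' (by positivity)]
  have l2 : Real.log (y - 1/2) = Real.log y + Real.log (1 - 1 / (2*y)) := by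
    rw [e2, Real.log_mul hy0.ne' (by linarith)]
  have h' := mul_le_mul_of_nonneg_left h hy0.le
  have e3 : y * (2 * (1 / (2*y))) = 1 := by field_simp
  have e4 : (k:ℝ) + 1/2 = y - 1/2 := by rw [hy]; ring
  have hf : Real.log ((k+1).factorial : ℝ) = Real.log y + Real.log (k.factorial : ℝ) := by
    rw [Nat.factorial_succ]; push_cast
    rw [Real.log_mul (by positivity) (by positivity)]
  unfold G
  rw [hf, e4]
  push_cast
  rw [← hy, l1, l2]
  rw [e3, mul_sub, ← mul_assoc, ← mul_assoc, ← e1, ← e2] at h'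
  linarith

lemma G_anti : Antitone G := antitone_nat_of_succ_le G_step

lemma upper_q (α β N p : ℝ) (hα : 0 < α) (hβ : 0 < β) (hN : N = α + β) (hp : 0 < p) (hp1 : p < 1) :
    α * Real.log p + β * Real.log (1 - p) ≤
      α * Real.log α + β * Real.log β - N * Real.log N := by
  have hN0 : 0 < N := by linarith
  have hq : 0 < 1 - p := by linarith
  have h1 := Real.log_le_sub_one_of_pos (show 0 < p * N / α by positivity)
  have h2 := Real.log_le_sub_one_of_pos (show 0 < (1 - p) * N / β by positivity)
  rw [Real.log_div (by positivity) hα.ne', Real.log_mul hp.ne' hN0.ne'] at h1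
  rw [Real.log_div (by positivity) hβ.ne', Real.log_mul hq.ne' hN0.ne'] at h2
  have h1' := mul_le_mul_of_nonneg_left h1 hα.le
  have h2' := mul_le_mul_of_nonneg_left h2 hβ.le
  have e1 : α * (p * N / α - 1) = p * N - α := by field_simp
  have e2 : β * ((1 - p) * N / β - 1) = (1 - p) * N - β := by field_simp
  rw [e1] at h1'
  rw [e2] at h2'
  have : N * Real.log N = α * Real.log N + β * Real.log N := by rw [hN]; ring
  rw [this]
  nlinarith

lemma lower_q (α β x y p : ℝ) (hα : 0 < α) (hβ : 0 < β) (hx : 0 < x) (hxp : x ≤ p) (hpy : p ≤ y)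
    (hy : y < 1) :
    min (α * Real.log x + β * Real.log (1 - x)) (α * Real.log y + β * Real.log (1 - y)) ≤
    α * Real.log p + β * Real.log (1 - p) := by
  have hc : ConcaveOn ℝ (Set.Ioo (0:ℝ) 1) (fun p => α * Real.log p + β * Real.log (1 - p)) := by
    have hlog : ConcaveOn ℝ (Set.Ioi (0:ℝ)) Real.log := strictConcaveOn_log_Ioi.concaveOn
    refine ⟨convex_Ioo 0 1, ?_⟩
    intro u hu v hv a b ha hb hab
    have h1 := hlog.2 (show u ∈ Set.Ioi (0:ℝ) from hu.1) (show v ∈ Set.Ioi (0:ℝ) from hv.1) ha hb hab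
    have h2 := hlog.2 (show 1 - u ∈ Set.Ioi (0:ℝ) from sub_pos.2 hu.2)
      (show 1 - v ∈ Set.Ioi (0:ℝ) from sub_pos.2 hv.2) ha hb hab
    simp only [smul_eq_mul] at *
    have e : a * (1 - u) + b * (1 - v) = 1 - (a * u + b * v) := by linear_combination hab
    rw [e] at h2
    have h1' := mul_le_mul_of_nonneg_left h1 hα.le
    have h2' := mul_le_mul_of_nonneg_left h2 hβ.le
    nlinarith
  exact hc.min_le_of_mem_Icc (x := x) (y := y) ⟨hx, by linarith⟩ ⟨by linarith, hy⟩ ⟨hxp, hpy⟩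

lemma end_q (a b : ℕ) (ha : 1 ≤ a) :
    Real.log ((a + b + 1).factorial : ℝ) - Real.log (a.factorial : ℝ) - Real.log (b.factorial : ℝ)
      + (a + 1/2) * Real.log (a / (a + b + 1)) + (b + 1/2) * Real.log ((b + 1) / (a + b + 1))
      - 1/2 * Real.log (a + b + 1) = H (a + b + 1) - H a - H (b + 1) := by
  have ha0 : (0:ℝ) < a := by exact_mod_cast ha
  have hf : Real.log ((b+1).factorial : ℝ) = Real.log ((b:ℝ)+1) + Real.log (b.factorial : ℝ) := by
    rw [Nat.factorial_succ]; push_cast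
    rw [Real.log_mul (by positivity) (by positivity)]
  unfold H
  rw [hf, Real.log_div (by positivity) (by positivity), Real.log_div (by positivity) (by positivity)]
  push_cast
  ring

lemma H_one : H 1 = 1 := by simp [H]

lemma H_two : H 2 = 2 - 3/2 * Real.log 2 := by simp [H, Nat.factorial]; ring

lemma lower_const : Real.log 0.3 ≤ 1/2 * Real.log (2 * Real.pi) - H 1 - H 2 := by
  rw [H_one, H_two, Real.log_mul (by norm_num) Real.pi_pos.ne']
  have hpi : Real.log 3 ≤ Real.log Real.pi := Real.log_le_log (by norm_num) Real.pi_gt_three.le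
  have e : (6:ℝ) ≤ - 2 * Real.log 0.3 + 4 * Real.log 2 + Real.log 3 := by
    have : - 2 * Real.log 0.3 + 4 * Real.log 2 + Real.log 3 = Real.log ((0.3)⁻¹ ^ 2 * 2 ^ 4 * 3) := by
      rw [Real.log_mul (by norm_num) (by norm_num), Real.log_mul (by norm_num) (by norm_num),
        Real.log_pow, Real.log_pow, Real.log_inv]
      push_cast; ring
    rw [this, Real.le_log_iff_exp_le (by norm_num)]
    have h := Real.exp_one_lt_d9
    have : Real.exp 6 = Real.exp 1 ^ 6 := by rw [← Real.exp_nat_mul]; norm_num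
    rw [this]
    calc Real.exp 1 ^ 6 ≤ 2.7182818286 ^ 6 := by gcongr
      _ ≤ _ := by norm_num
  linarith

lemma upper_const : H 5 + 2 * G 1 ≤ Real.log 0.435 := by
  have h5 : Real.log (120:ℝ) = Real.log ((5:ℕ).factorial : ℝ) := by norm_num [Nat.factorial]
  unfold H G
  rw [← h5]
  norm_num
  have : (4:ℝ) ≤ 2 * Real.log (87/200) + 11 * Real.log 5 - 2 * Real.log 120 - 6 * Real.log (3/2) := by
    have e : 2 * Real.log (87/200) + 11 * Real.log 5 - 2 * Real.log 120 - 6 * Real.log (3/2) =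
        Real.log ((87/200)^2 * 5^11 / (120^2 * (3/2)^6)) := by
      conv_rhs => rw [Real.log_div (by norm_num) (by norm_num),
        Real.log_mul (by norm_num) (by norm_num), Real.log_mul (by norm_num) (by norm_num),
        Real.log_pow, Real.log_pow, Real.log_pow, Real.log_pow]
      push_cast; ring
    rw [e, Real.le_log_iff_exp_le (by norm_num)]
    have h := Real.exp_one_lt_d9
    have : Real.exp 4 = Real.exp 1 ^ 4 := by rw [← Real.exp_nat_mul]; norm_num
    rw [this]
    calc Real.exp 1 ^ 4 ≤ 2.7182818286 ^ 4 := by gcongr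
      _ ≤ _ := by norm_num
  linarith

lemma log_rhs (c N p : ℝ) (hc : 0 < c) (hN : 0 < N) (hp : 0 < p) (hp1 : p < 1) :
    Real.log (c * Real.sqrt N * Real.sqrt (p * (1 - p))) =
      Real.log c + 1/2 * Real.log N + 1/2 * Real.log p + 1/2 * Real.log (1 - p) := by
  have hq : 0 < 1 - p := by linarith
  have : 0 < p * (1 - p) := by positivity
  rw [Real.log_mul (by positivity) (by positivity), Real.log_mul (by positivity) (by positivity),
    Real.log_sqrt hN.le, Real.log_sqrt this.le, Real.log_mul hp.ne' hq.ne']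
  ring

lemma psi_eq (a b : ℕ) : ((a:ℝ) + 1) * ((a + b + 1).choose (a + 1) : ℝ) =
    ((a + b + 1).factorial : ℝ) / (a.factorial * b.factorial) := by
  have h := Nat.choose_mul_factorial_mul_factorial (show a + 1 ≤ a + b + 1 by omega)
  rw [show a + b + 1 - (a + 1) = b by omega, Nat.factorial_succ a] at h
  rw [eq_div_iff (by positivity), ← h]
  push_cast
  ring

lemma log_psi (a b : ℕ) (p : ℝ) (hp : 0 < p) (hp1 : p < 1) :
    Real.log (((a:ℝ) + 1) * ((a + b + 1).choose (a + 1) : ℝ) * p ^ (a + 1) * (1 - p) ^ (b + 1)) =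
    Real.log ((a + b + 1).factorial : ℝ) - Real.log (a.factorial : ℝ) - Real.log (b.factorial : ℝ)
     + (a + 1) * Real.log p + (b + 1) * Real.log (1 - p) := by
  have hq : 0 < 1 - p := by linarith
  rw [psi_eq, Real.log_mul (by positivity) (by positivity),
    Real.log_mul (by positivity) (by positivity), Real.log_div (by positivity) (by positivity),
    Real.log_mul (by positivity) (by positivity), Real.log_pow, Real.log_pow]
  push_cast
  ring

end S7

open S7 in
/-- with `ψ(m,p) = (m+1) C(n,m+1) p^{m+1} (1-p)^{n-m}` and `m = ⌊np⌋`,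
there exist universal constants `c > 0.29` and `c' < 0.44` such that for all
`n ≥ 5` and `p ∈ (0,1)` with `1 ≤ m ≤ n-2`,
`c √n √(p(1-p)) ≤ ψ(m,p) ≤ c' √n √(p(1-p))`. -/
theorem stmt7 :
    ∃ c c' : ℝ, 0.29 < c ∧ c' < 0.44 ∧
      ∀ (n : ℕ) (p : ℝ) (m : ℕ), 5 ≤ n → 0 < p → p < 1 → m = ⌊(n : ℝ) * p⌋₊ →
        1 ≤ m → m ≤ n - 2 →
        c * Real.sqrt n * Real.sqrt (p * (1 - p))
            ≤ ((m : ℝ) + 1) * (n.choose (m + 1) : ℝ) * p ^ (m + 1) * (1 - p) ^ (n - m) ∧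
        ((m : ℝ) + 1) * (n.choose (m + 1) : ℝ) * p ^ (m + 1) * (1 - p) ^ (n - m)
            ≤ c' * Real.sqrt n * Real.sqrt (p * (1 - p)) := by
  refine ⟨0.3, 0.435, by norm_num, by norm_num, ?_⟩
  intro n p a hn hp hp1 hm ha ham
  obtain ⟨b, rfl⟩ : ∃ b, n = a + b + 1 := ⟨n - a - 1, by omega⟩
  have hb : 1 ≤ b := by omega
  have hq : 0 < 1 - p := by linarith
  have hN : (0:ℝ) < ((a + b + 1 : ℕ) : ℝ) := by positivity
  have hpq : 0 < p * (1 - p) := by positivity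
  rw [show a + b + 1 - a = b + 1 by omega]
  have hch : 0 < (a + b + 1).choose (a + 1) := Nat.choose_pos (by omega)
  have hψ : 0 < ((a:ℝ) + 1) * ((a + b + 1).choose (a + 1) : ℝ) * p ^ (a + 1) * (1 - p) ^ (b + 1) := by
    positivity
  have hlow : (a:ℝ) ≤ ((a + b + 1 : ℕ) : ℝ) * p := by
    have h := Nat.floor_le (show 0 ≤ ((a + b + 1 : ℕ) : ℝ) * p by positivity)
    rwa [← hm] at h
  have hupp : ((a + b + 1 : ℕ) : ℝ) * p < a + 1 := by
    have h := Nat.lt_floor_add_one (((a + b + 1 : ℕ) : ℝ) * p)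
    rwa [← hm] at h
  have ha0 : (0:ℝ) < a := by exact_mod_cast ha
  have hb0 : (0:ℝ) < b := by exact_mod_cast hb
  constructor
  · rw [← Real.log_le_log_iff (by positivity) hψ, log_rhs _ _ _ (by norm_num) hN hp hp1,
      log_psi a b p hp hp1]
    push_cast at hlow hupp hN ⊢
    have key := lower_q ((a:ℝ) + 1/2) (b + 1/2) (a / (a + b + 1)) ((a + 1) / (a + b + 1)) p
      (by positivity) (by positivity) (by positivity)
      (by rw [div_le_iff₀ hN]; linarith) (by rw [le_div_iff₀ hN]; linarith)
      (by rw [div_lt_one hN]; linarith)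
    rw [show 1 - (a:ℝ) / (a + b + 1) = (b + 1) / (a + b + 1) by field_simp; ring,
      show 1 - ((a:ℝ) + 1) / (a + b + 1) = b / (a + b + 1) by field_simp; ring] at key
    have hc := lower_const
    have hH := H_lower (a + b + 1) (by omega)
    have E1 := end_q a b ha
    have E2 := end_q b a hb
    rw [show b + a + 1 = a + b + 1 by omega, add_comm (b:ℝ) a] at E2
    have A1 := H_anti le_rfl ha
    have A2 := H_anti le_rfl hb
    have B1 := H_anti (j := 2) (by norm_num) (show 2 ≤ a + 1 by omega)
    have B2 := H_anti (j := 2) (by norm_num) (show 2 ≤ b + 1 by omega)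
    rcases min_le_iff.1 key with h | h <;> linarith
  · rw [← Real.log_le_log_iff hψ (by positivity), log_rhs _ _ _ (by norm_num) hN hp hp1,
      log_psi a b p hp hp1]
    have key := upper_q ((a:ℝ) + 1/2) (b + 1/2) ((a + b + 1 : ℕ) : ℝ) p (by positivity)
      (by positivity) (by push_cast; ring) hp hp1
    have hc := upper_const
    have h5 := H_anti (by norm_num) hn
    have g1 := G_anti ha
    have g2 := G_anti hb
    have eH : H (a + b + 1) = Real.log ((a + b + 1).factorial : ℝ) + ((a + b + 1 : ℕ) : ℝ)
      - (((a + b + 1 : ℕ) : ℝ) + 1/2) * Real.log ((a + b + 1 : ℕ) : ℝ) := rfl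
    have ea : G a = (a + 1/2) * Real.log (a + 1/2) - (a + 1/2) - Real.log (a.factorial : ℝ) := rfl
    have eb : G b = (b + 1/2) * Real.log (b + 1/2) - (b + 1/2) - Real.log (b.factorial : ℝ) := rfl
    have en : ((a + b + 1 : ℕ) : ℝ) = a + b + 1 := by push_cast; ring
    linarith
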